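/- Let s be a Nash equilibrium of the degNCG (or a kNE of the degkNCG for some k ≥ 2) on n nodes whose induced graph G is connected with diameter D. Then the social cost satisfies cost(G) ≤ 3n²D + n²; in particular, since every strategy vector on n nodes has social cost at least n(n−1), the social cost of any such equilibrium is at most O(D) times the minimum possible social cost. -/

import Mathlib

/-!
Every agent `u` may deviate by only deleting edges. Among her purchases she keeps a maximal set `I`
of nodes whose closed neighbourhoods, with `u` removed, are pairwise disjoint. Disjointness bounds
the price of the kept edges by `n`. Maximality says that a dropped neighbour is joined to some kept
one by a walk of length at most two avoiding `u`, so each distance from `u` grows by at most two,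
hence is at most `D + 2 ≤ 3 * D`. Nothing new is bought, so the deviation is admissible under any
locality constraint, and in equilibrium every agent pays at most `3 * n * D + n`; summing over the
agents gives the upper bound. The lower bound holds because distinct nodes have distance at least
one.
-/

/-!
Degree price network creation games (degNCG / degkNCG / degAOG / degkAOG).

A strategy vector assigns to each agent `u` a finite set `st u` of nodes to
which `u` buys an edge.  The induced graph has an edge `{u,v}` iff `v ∈ st u`
or `u ∈ st v`.  The cost of agent `u` is the sum of `deg v - 1` over all `v`
to which `u` bought an edge, plus the sum of (extended, i.e. `⊤` when
unreachable) graph distances from `u` to all nodes.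
-/

/-- A strategy vector: each agent picks the set of nodes it buys edges to. -/
abbrev Strategy (V : Type) := V → Finset V

variable {V : Type} [Fintype V] [DecidableEq V]

/-- The network induced by a strategy vector: `{u,v}` is an edge iff
`v ∈ st u` or `u ∈ st v`. -/
def netG (st : Strategy V) : SimpleGraph V :=
  SimpleGraph.fromRel (fun u v => v ∈ st u)

/-- The degree of a node in the induced network. -/
noncomputable def deg (st : Strategy V) (v : V) : ℕ :=
  letI : DecidableRel (netG st).Adj := Classical.decRel _
  (netG st).degree v

/-- The cost of agent `u`: degree-prices of the bought edges plus the sum of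
the distances to all nodes (`⊤` if some node is unreachable). -/
noncomputable def cost (st : Strategy V) (u : V) : ℕ∞ :=
  ((∑ v ∈ st u, (deg st v - 1) : ℕ) : ℕ∞) + ∑ w, (netG st).edist u w

/-- A strategy vector is valid if nobody buys a self-loop and every edge has
exactly one owner. -/
def Valid (st : Strategy V) : Prop :=
  (∀ u, u ∉ st u) ∧ (∀ u v, v ∈ st u → u ∉ st v)

/-- Pure Nash equilibrium of the degNCG: no agent can strictly decrease her
cost by unilaterally switching to any other strategy. -/
def IsNE (st : Strategy V) : Prop :=
  ∀ (u : V) (t : Finset V), u ∉ t →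
    cost st u ≤ cost (Function.update st u t) u

/-- `k`-local Nash equilibrium of the degkNCG: no agent can strictly decrease
her cost by a deviation in which every newly bought edge goes to a node at
distance at most `k` in the current graph. -/
def IskNE (k : ℕ) (st : Strategy V) : Prop :=
  ∀ (u : V) (t : Finset V), u ∉ t →
    (∀ v ∈ t \ st u, (netG st).edist u v ≤ k) →
    cost st u ≤ cost (Function.update st u t) u

/-- Equilibrium of the add-only game degAOG: no agent can strictly decrease
her cost by adding edges (deviations are supersets of the current strategy). -/
def IsAOEq (st : Strategy V) : Prop :=
  ∀ (u : V) (t : Finset V), u ∉ t → st u ⊆ t →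
    cost st u ≤ cost (Function.update st u t) u

/-- Equilibrium of the `k`-local add-only game degkAOG. -/
def IskAOEq (k : ℕ) (st : Strategy V) : Prop :=
  ∀ (u : V) (t : Finset V), u ∉ t → st u ⊆ t →
    (∀ v ∈ t \ st u, (netG st).edist u v ≤ k) →
    cost st u ≤ cost (Function.update st u t) u

/-- The social cost: the sum of all agents' costs. -/
noncomputable def social (st : Strategy V) : ℕ∞ :=
  ∑ u, cost st u

/-- The center sponsored spanning star on `n + 2` nodes: agent `0` buys an
edge to every other agent, everybody else buys nothing. -/
def starStrat (n : ℕ) : Strategy (Fin (n + 2)) := fun u =>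
  if u = 0 then ({0} : Finset (Fin (n + 2)))ᶜ else ∅

theorem netG_adj (st : Strategy V) (a b : V) :
    (netG st).Adj a b ↔ a ≠ b ∧ (b ∈ st a ∨ a ∈ st b) := by
  simp [netG, SimpleGraph.fromRel_adj]

open Classical in
/-- The neighbours of `v` other than `u`, together with `v` itself. -/
noncomputable def nbhd (st : Strategy V) (u v : V) : Finset V :=
  insert v (((netG st).neighborFinset v).erase u)

theorem netG_update_le (st : Strategy V) (u : V) (I : Finset V) (hI : I ⊆ st u) :
    netG (Function.update st u I) ≤ netG st := by
  intro a b h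
  rw [netG_adj] at h ⊢
  refine ⟨h.1, ?_⟩
  have key : ∀ x y, y ∈ Function.update st u I x → y ∈ st x := by
    intro x y hxy
    by_cases hx : x = u
    · subst hx
      rw [Function.update_self] at hxy
      exact hI hxy
    · rwa [Function.update_of_ne hx] at hxy
  exact h.2.imp (key _ _) (key _ _)

/-- Edges not incident to the deviating agent survive the deviation. -/
theorem netG_update_adj (st : Strategy V) (u : V) (I : Finset V) {a b : V}
    (h : (netG st).Adj a b) (ha : a ≠ u) (hb : b ≠ u) :
    (netG (Function.update st u I)).Adj a b := by
  rw [netG_adj] at h ⊢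
  rwa [Function.update_of_ne ha, Function.update_of_ne hb]

theorem price_le (st : Strategy V) (u v : V) (I : Finset V) (hI : I ⊆ st u) (hv : v ∈ I)
    (huv : u ≠ v) :
    deg (Function.update st u I) v - 1 ≤ (nbhd st u v).card := by
  classical
  have h1 : deg (Function.update st u I) v ≤ (netG st).degree v := by
    unfold deg
    have := SimpleGraph.degree_le_of_le (v := v) (netG_update_le st u I hI)
    convert this
  have hu : u ∈ (netG st).neighborFinset v := by
    rw [SimpleGraph.mem_neighborFinset, netG_adj]
    exact ⟨huv.symm, Or.inr (hI hv)⟩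
  have h2 : (((netG st).neighborFinset v).erase u).card = (netG st).degree v - 1 := by
    rw [Finset.card_erase_of_mem hu, SimpleGraph.card_neighborFinset_eq_degree]
  have h3 : (((netG st).neighborFinset v).erase u).card ≤ (nbhd st u v).card := by
    refine Finset.card_le_card ?_
    intro x hx
    unfold nbhd
    rw [Finset.mem_insert]
    right
    convert hx
  omega

/-- A point common to the reduced neighbourhoods of `v` and `v'` gives a walk of length at most two
from `v'` to `v` avoiding `u`, which survives any deviation of `u`. -/
theorem edist_le_two (st : Strategy V) (u v v' x : V) (I : Finset V) (hv : v ≠ u) (hv' : v' ≠ u)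
    (hx : x ∈ nbhd st u v) (hx' : x ∈ nbhd st u v') :
    (netG (Function.update st u I)).edist v' v ≤ 2 := by
  have key : ∀ y, y ≠ u → x ∈ nbhd st u y →
      (netG (Function.update st u I)).edist y x ≤ 1 := by
    intro y hy hxy
    simp only [nbhd, Finset.mem_insert, Finset.mem_erase, SimpleGraph.mem_neighborFinset] at hxy
    rcases hxy with rfl | ⟨hxu, hadj⟩
    · simp
    · exact (SimpleGraph.edist_eq_one_iff_adj.2 (netG_update_adj st u I hadj hy hxu)).le
  calc _ ≤ (netG (Function.update st u I)).edist v' x + (netG (Function.update st u I)).edist x v :=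
        SimpleGraph.edist_triangle
    _ ≤ 1 + 1 := by
        refine add_le_add (key v' hv' hx') ?_
        rw [SimpleGraph.edist_comm]
        exact key v hv hx
    _ = 2 := by norm_num

/-- Distances from `u` grow by at most two if every dropped neighbour stays within distance three.
The statement about walks from an arbitrary node `a` makes the induction on walks go through. -/
theorem edist_walk (st : Strategy V) (u : V) (I : Finset V)
    (h3 : ∀ v ∈ st u, (netG (Function.update st u I)).edist u v ≤ 3) {a w : V}
    (p : (netG st).Walk a w) :
    (netG (Function.update st u I)).edist a w ≤ p.length ∨
      (netG (Function.update st u I)).edist u w ≤ p.length + 2 := by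
  induction p with
  | nil => left; simp
  | @cons a b w hab p ih =>
    set H := netG (Function.update st u I) with hH
    rw [SimpleGraph.Walk.length_cons]
    push_cast
    rcases ih with ih | ih
    · by_cases hadj : H.Adj a b
      · left
        calc H.edist a w ≤ H.edist a b + H.edist b w := SimpleGraph.edist_triangle
          _ ≤ 1 + p.length := add_le_add (SimpleGraph.edist_eq_one_iff_adj.2 hadj).le ih
          _ = _ := add_comm _ _
      · right
        by_cases hb : b = u
        · subst hb
          refine ih.trans ?_
          rw [add_assoc]
          exact le_self_add
        by_cases ha : a = u
        · subst ha
          have hba : b ∈ st a := by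
            by_contra hcon
            refine hadj ?_
            rw [hH, netG_adj]
            rw [netG_adj] at hab
            refine ⟨hab.1, Or.inr ?_⟩
            rw [Function.update_of_ne hb]
            exact hab.2.resolve_left hcon
          calc H.edist a w ≤ H.edist a b + H.edist b w := SimpleGraph.edist_triangle
            _ ≤ 3 + p.length := add_le_add (h3 b hba) ih
            _ = p.length + 1 + 2 := by rw [add_assoc, add_comm]; norm_num
        · exact absurd (netG_update_adj st u I hab ha hb) hadj
    · right
      refine ih.trans ?_
      gcongr
      exact le_self_add

/-- The kept set of the deviation: a maximal packing of reduced neighbourhoods among the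
purchases of `u`. -/
theorem exists_packing (st : Strategy V) (u : V) :
    ∃ I ⊆ st u, (∀ v ∈ I, ∀ v' ∈ I, v ≠ v' → Disjoint (nbhd st u v) (nbhd st u v')) ∧
      ∀ v ∈ st u, ∃ v' ∈ I, ∃ x, x ∈ nbhd st u v ∧ x ∈ nbhd st u v' := by
  classical
  obtain ⟨I, hI, hmax⟩ := Finset.exists_max_image
    ((st u).powerset.filter fun I => ∀ v ∈ I, ∀ v' ∈ I, v ≠ v' →
      Disjoint (nbhd st u v) (nbhd st u v')) Finset.card ⟨∅, by simp⟩
  rw [Finset.mem_filter, Finset.mem_powerset] at hI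
  refine ⟨I, hI.1, hI.2, fun v hv => ?_⟩
  by_cases hvI : v ∈ I
  · exact ⟨v, hvI, v, by simp [nbhd], by simp [nbhd]⟩
  by_contra! hcon
  have hd : ∀ v' ∈ I, Disjoint (nbhd st u v) (nbhd st u v') := fun v' hv' =>
    Finset.disjoint_left.2 (fun x hx => hcon v' hv' x hx)
  have := hmax (insert v I) (by
    rw [Finset.mem_filter, Finset.mem_powerset]
    refine ⟨Finset.insert_subset hv hI.1, ?_⟩
    intro a ha b hb hab
    rw [Finset.mem_insert] at ha hb
    rcases ha with rfl | ha <;> rcases hb with rfl | hb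
    · exact absurd rfl hab
    · exact hd b hb
    · exact (hd a ha).symm
    · exact hI.2 a ha b hb hab)
  rw [Finset.card_insert_of_notMem hvI] at this
  omega

theorem exists_deviation (st : Strategy V) (u : V) (hu : u ∉ st u)
    (hc : (netG st).Connected) (hD : 1 ≤ (netG st).diam) :
    ∃ I ⊆ st u, cost (Function.update st u I) u ≤
      ((Fintype.card V + Fintype.card V * (3 * (netG st).diam) : ℕ) : ℕ∞) := by
  classical
  obtain ⟨I, hI, hdisj, hmax⟩ := exists_packing st u
  have hne : ∀ v ∈ st u, v ≠ u := fun v hv h => hu (h ▸ hv)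
  refine ⟨I, hI, ?_⟩
  have h3 : ∀ v ∈ st u, (netG (Function.update st u I)).edist u v ≤ 3 := by
    intro v hv
    obtain ⟨v', hv', x, hx, hx'⟩ := hmax v hv
    have hadj : (netG (Function.update st u I)).Adj u v' := by
      rw [netG_adj, Function.update_self]
      exact ⟨(hne v' (hI hv')).symm, Or.inl hv'⟩
    calc _ ≤ (netG (Function.update st u I)).edist u v' +
          (netG (Function.update st u I)).edist v' v := SimpleGraph.edist_triangle
      _ ≤ 1 + 2 := add_le_add (SimpleGraph.edist_eq_one_iff_adj.2 hadj).le
          (edist_le_two st u v v' x I (hne v hv) (hne v' (hI hv')) hx hx')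
      _ = 3 := by norm_num
  have hdist : ∀ w, (netG (Function.update st u I)).edist u w ≤
      ((3 * (netG st).diam : ℕ) : ℕ∞) := by
    intro w
    obtain ⟨p, hp⟩ := hc.exists_walk_length_eq_dist u w
    have hle : (netG st).dist u w ≤ (netG st).diam := by
      have := hc.nonempty
      exact SimpleGraph.dist_le_diam (SimpleGraph.connected_iff_ediam_ne_top.1 hc)
    have hpl : (netG (Function.update st u I)).edist u w ≤ ((p.length + 2 : ℕ) : ℕ∞) := by
      rcases edist_walk st u I h3 p with h | h
      · refine h.trans ?_
        exact_mod_cast Nat.le_add_right _ _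
      · exact_mod_cast h
    refine hpl.trans ?_
    exact_mod_cast (by omega : p.length + 2 ≤ 3 * (netG st).diam)
  have hprice : ∑ v ∈ I, (deg (Function.update st u I) v - 1) ≤ Fintype.card V := by
    calc _ ≤ ∑ v ∈ I, (nbhd st u v).card := Finset.sum_le_sum fun v hv =>
          price_le st u v I hI hv (hne v (hI hv)).symm
      _ = (I.biUnion (nbhd st u)).card := (Finset.card_biUnion hdisj).symm
      _ ≤ Fintype.card V := Finset.card_le_univ _
  unfold cost
  rw [Function.update_self, Nat.cast_add]
  refine add_le_add (by exact_mod_cast hprice) ?_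
  refine (Finset.sum_le_sum fun w _ => hdist w).trans ?_
  rw [Finset.sum_const, Finset.card_univ, nsmul_eq_mul, ← Nat.cast_mul]

theorem le_cost (st : Strategy V) (u : V) : ((Fintype.card V - 1 : ℕ) : ℕ∞) ≤ cost st u := by
  unfold cost
  refine le_trans ?_ le_add_self
  calc ((Fintype.card V - 1 : ℕ) : ℕ∞) = ∑ w ∈ Finset.univ.erase u, (1 : ℕ∞) := by
        simp [Finset.card_erase_of_mem]
    _ ≤ ∑ w ∈ Finset.univ.erase u, (netG st).edist u w := by
        refine Finset.sum_le_sum fun w hw => ?_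
        rw [Order.one_le_iff_pos]
        exact SimpleGraph.edist_pos_of_ne (Finset.ne_of_mem_erase hw).symm
    _ ≤ _ := Finset.sum_le_sum_of_subset (Finset.erase_subset _ _)

/-- In a Nash equilibrium of the degNCG (or a kNE of the
degkNCG, `k ≥ 2`) on `n` nodes whose induced graph is connected with diameter
`D`, the social cost is at most `3n²D + n²`; in particular, since every
strategy vector on `n` nodes has social cost at least `n(n-1)`, the social
cost of any such equilibrium is at most `O(D)` times the minimum possible
social cost. -/
theorem social_le_diam (n : ℕ) (hn : 2 ≤ n) (st : Strategy (Fin n))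
    (hv : Valid st) (hne : IsNE st ∨ ∃ k, 2 ≤ k ∧ IskNE k st)
    (hc : (netG st).Connected) :
    social st ≤ (3 * n ^ 2 * (netG st).diam + n ^ 2 : ℕ∞) ∧
    ∀ st' : Strategy (Fin n), Valid st' →
      (n * (n - 1) : ℕ∞) ≤ social st' := by
  constructor
  · have hD : 1 ≤ (netG st).diam := by
      have h01 : (⟨0, by omega⟩ : Fin n) ≠ ⟨1, by omega⟩ := by simp
      have := hc.nonempty
      exact (hc.pos_dist_of_ne h01).trans_le
        (SimpleGraph.dist_le_diam (SimpleGraph.connected_iff_ediam_ne_top.1 hc))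
    have hcost : ∀ u, cost st u ≤ ((n + n * (3 * (netG st).diam) : ℕ) : ℕ∞) := by
      intro u
      obtain ⟨I, hI, hle⟩ := exists_deviation st u (hv.1 u) hc hD
      rw [Fintype.card_fin] at hle
      refine le_trans ?_ hle
      have huI : u ∉ I := fun h => hv.1 u (hI h)
      rcases hne with h | ⟨k, -, h⟩
      · exact h u I huI
      · refine h u I huI fun v hv' => ?_
        rw [Finset.mem_sdiff] at hv'
        exact absurd (hI hv'.1) hv'.2
    unfold social
    refine (Finset.sum_le_sum fun u _ => hcost u).trans ?_
    rw [Finset.sum_const, Finset.card_univ, Fintype.card_fin, nsmul_eq_mul]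
    norm_cast
    exact le_of_eq (by ring)
  · intro st' _
    unfold social
    calc (n * (n - 1) : ℕ∞) = ∑ _u : Fin n, ((Fintype.card (Fin n) - 1 : ℕ) : ℕ∞) := by
          simp
      _ ≤ _ := Finset.sum_le_sum fun u _ => le_cost st' u
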